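/- Integral conjugation reducing the norm (Proposition 15): For every d ≥ 2 there are positive constants c₁ = c₁(d) and r₁ = r₁(d) such that for every finite subset Σ of SL_d(ℤ) that generates a Zariski-dense subgroup of SL_d(ℝ), there exists γ ∈ SL_d(ℤ) with sup_{s ∈ Σ} ‖γ·s·γ⁻¹‖ ≤ c₁·E(Σ)^{r₁}, where E(Σ) = inf_{h ∈ SL_d(ℝ)} sup_{s ∈ Σ} ‖h·s·h⁻¹‖ and ‖·‖ is the operator norm on d×d real matrices. -/

import Mathlib

open Matrix Pointwise

/-- The `ℓ²`-norm of a vector in `ℝᵈ`. -/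
noncomputable def rvNorm {d : ℕ} (x : Fin d → ℝ) : ℝ :=
  Real.sqrt (∑ i, x i ^ 2)

/-- The operator norm of a real `d × d` matrix with respect to the Euclidean norm on `ℝᵈ`
(supremum over the closed unit ball). -/
noncomputable def rOpNorm {d : ℕ} (M : Matrix (Fin d) (Fin d) ℝ) : ℝ :=
  sSup {r : ℝ | ∃ x : Fin d → ℝ, rvNorm x ≤ 1 ∧ r = rvNorm (M.mulVec x)}

/-!
Choose `h ∈ SL_d(ℝ)` for which `q = sup ‖h s h⁻¹‖` is within a factor `2` of its infimum `E(S)`, and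
measure `z ∈ ℤᵈ` by the length of `h z`. By Minkowski's theorem some nonzero integer vector has
length at most `2d`. Each `s ∈ S` multiplies lengths by at most `q`, and by Zariski density no
proper nonzero rational subspace is `S`-stable, so applying at most `d` elements of `S` in
succession to that vector yields `d` linearly independent integer vectors of length at most
`2 d q ^ d`.

They only span a sublattice of `ℤᵈ`. If `P` is the matrix of these vectors, then the lattice
`adj(P) ℤᵈ` contains `det(P) ℤᵈ`, hence has a basis with entries bounded by `|det P|`. The
corresponding basis `U` of `ℤᵈ` therefore consists of combinations of the columns of `P` with
coefficients in `[-1, 1]`. Thus `h U` has entries polynomial in `q`, so does `h s U`, and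
Cramer's rule bounds `U⁻¹ s U = (h U)⁻¹ (h s U)`: one takes `γ = U⁻¹`.
-/

open Module
open scoped Matrix.Norms.L2Operator

section LatticeReduction

variable {n : Type*}

theorem exists_mem_forall_coord_dvd {Λ : Submodule ℤ (n → ℤ)} {D : ℤ} (hD : D ≠ 0)
    (hΛ : ∀ y, D • y ∈ Λ) {t : Finset n} {a : n} (ha : a ∈ t) :
    ∃ x ∈ Λ, (∀ i, |x i| ≤ |D|) ∧ (∀ i ∉ t, x i = 0) ∧
      ∀ z ∈ Λ, (∀ i ∉ t, z i = 0) → x a ∣ z a := by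
  classical
  let Λₜ : Submodule ℤ (n → ℤ) := Λ ⊓ ⨅ i ∉ t, LinearMap.ker (LinearMap.proj i)
  have mem_Λₜ {z : n → ℤ} : z ∈ Λₜ ↔ z ∈ Λ ∧ ∀ i ∉ t, z i = 0 := by
    simp only [Λₜ, Submodule.mem_inf, Submodule.mem_iInf, LinearMap.mem_ker, LinearMap.proj_apply]
  obtain ⟨g, hg⟩ := (inferInstance : (Λₜ.map (LinearMap.proj a)).IsPrincipal)
  have dvd_coord {z : n → ℤ} (hz : z ∈ Λₜ) : g ∣ z a :=
    Ideal.mem_span_singleton.mp (hg.le (Submodule.mem_map_of_mem hz))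
  obtain ⟨y, hy, hya : y a = g⟩ : g ∈ Λₜ.map (LinearMap.proj a) :=
    hg.ge (Submodule.mem_span_singleton_self g)
  have hgD : |g| ≤ |D| := by
    have hmem : D • Pi.single a 1 ∈ Λₜ := mem_Λₜ.mpr ⟨hΛ _, fun i hi => by
      simp [Pi.single_eq_of_ne (fun h : i = a => hi (h ▸ ha))]⟩
    have hdvd : g ∣ D := by simpa using dvd_coord hmem
    exact Int.le_of_dvd (abs_pos.mpr hD) ((abs_dvd_abs _ _).mpr hdvd)
  obtain ⟨x, hxΛ, hxa, hxi⟩ : ∃ x ∈ Λ, x a = g ∧ ∀ i ≠ a, x i = y i % D :=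
    ⟨y - D • fun i => if i = a then 0 else y i / D, Λ.sub_mem (mem_Λₜ.mp hy).1 (hΛ _),
      by simp [hya], fun i hi => by simp [hi, Int.emod_def]⟩
  refine ⟨x, hxΛ, fun i => ?_, fun i hi => ?_, fun z hz hzt => ?_⟩
  · by_cases hi : i = a
    · rwa [hi, hxa]
    · rw [hxi i hi, abs_of_nonneg (Int.emod_nonneg _ hD)]
      exact (Int.emod_lt_abs _ hD).le
  · rw [hxi i fun h => hi (h ▸ ha), (mem_Λₜ.mp hy).2 i hi, Int.zero_emod]
  · rw [hxa]
    exact dvd_coord (mem_Λₜ.mpr ⟨hz, hzt⟩)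

theorem exists_span_range_eq_abs_le [Finite n] {Λ : Submodule ℤ (n → ℤ)} {D : ℤ} (hD : D ≠ 0)
    (hΛ : ∀ y, D • y ∈ Λ) :
    ∃ b : n → n → ℤ, (∀ j i, |b j i| ≤ |D|) ∧ Submodule.span ℤ (Set.range b) = Λ := by
  classical
  cases nonempty_fintype n
  suffices key : ∀ s : Finset n, ∃ b : n → n → ℤ, (∀ j, b j ∈ Λ ∧ ∀ i, |b j i| ≤ |D|) ∧
      ∀ z ∈ Λ, (∀ i ∉ s, z i = 0) → z ∈ Submodule.span ℤ (b '' s) by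
    obtain ⟨b, hb, hspan⟩ := key Finset.univ
    refine ⟨b, fun j => (hb j).2, le_antisymm ?_ fun z hz => ?_⟩
    · exact Submodule.span_le.mpr (Set.range_subset_iff.mpr fun j => (hb j).1)
    · simpa using hspan z hz (by simp)
  intro s
  induction s using Finset.induction_on with
  | empty =>
    refine ⟨0, fun j => ⟨Λ.zero_mem, by simp⟩, fun z _ hz => ?_⟩
    rw [show z = 0 from funext fun i => hz i (Finset.notMem_empty i)]
    exact Submodule.zero_mem _
  | insert a s ha ih =>
    obtain ⟨b, hb, hspan⟩ := ih
    obtain ⟨x, hxΛ, hxD, hxs, hxa⟩ := exists_mem_forall_coord_dvd hD hΛ (s.mem_insert_self a)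
    refine ⟨Function.update b a x, fun j => ?_, fun z hz hzs => ?_⟩
    · by_cases hj : j = a
      · subst hj
        simpa using ⟨hxΛ, hxD⟩
      · simpa [hj] using hb j
    obtain ⟨c, hc⟩ := hxa z hz hzs
    have himage : Function.update b a x '' (insert a s : Finset n) = insert x (b '' s) := by
      rw [Finset.coe_insert, Set.image_insert_eq, Function.update_self]
      congr 1
      exact Set.image_congr fun j hj => Function.update_of_ne (by rintro rfl; exact ha hj) _ _
    rw [himage, Submodule.mem_span_insert]
    refine ⟨c, z - c • x, hspan _ (Λ.sub_mem hz (Λ.smul_mem c hxΛ)) fun i hi => ?_, by abel⟩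
    by_cases hia : i = a
    · subst hia
      simp [hc, mul_comm]
    · have hi' : i ∉ insert a s := by simp [hia, hi]
      simp [hzs i hi', hxs i hi']

variable [Fintype n] [DecidableEq n]

theorem exists_specialLinearGroup_eq_mul_diagonal [Nonempty n] {X : Matrix n n ℤ}
    (hX : IsUnit X.det) :
    ∃ (U : SpecialLinearGroup n ℤ) (ε : n → ℤ), (∀ j, |ε j| = 1) ∧ U.1 = X * diagonal ε := by
  obtain ⟨a⟩ := ‹Nonempty n›
  refine ⟨⟨X * diagonal (Function.update 1 a X.det), ?_⟩, Function.update 1 a X.det, fun j => ?_,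
    rfl⟩
  · rw [det_mul, det_diagonal, Finset.prod_update_of_mem (Finset.mem_univ a)]
    simp [Int.isUnit_mul_self hX]
  · by_cases hj : j = a
    · simpa [hj] using Int.isUnit_iff_abs_eq.mp hX
    · simp [hj]

theorem exists_specialLinearGroup_abs_adjugate_mul_le [Nonempty n] {P : Matrix n n ℤ}
    (hP : P.det ≠ 0) :
    ∃ U : SpecialLinearGroup n ℤ, ∀ i j, |(P.adjugate * U.1) i j| ≤ |P.det| := by
  obtain ⟨b, hb, hspan⟩ := exists_span_range_eq_abs_le (Λ := P.adjugate.mulVecLin.range) hP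
    fun y => ⟨P *ᵥ y, by simp [adjugate_mul]⟩
  choose x hx using fun j => hspan.le (Submodule.subset_span (Set.mem_range_self (f := b) j))
  have hX : IsUnit (of x)ᵀ.det := by
    have hinj : Function.Injective P.adjugate.mulVecLin :=
      mulVec_injective_of_det_ne_zero (by rw [det_adjugate]; exact pow_ne_zero _ hP)
    have hmap : (Submodule.span ℤ (Set.range x)).map P.adjugate.mulVecLin =
        (⊤ : Submodule ℤ (n → ℤ)).map P.adjugate.mulVecLin := by
      rw [Submodule.map_span, ← Set.range_comp, Submodule.map_top, ← hspan]
      exact congrArg _ (congrArg Set.range (funext hx))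
    rw [← isUnit_iff_isUnit_det, ← mulVec_surjective_iff_isUnit]
    have htop : (of x)ᵀ.mulVecLin.range = ⊤ :=
      (range_mulVecLin _).trans (Submodule.map_injective_of_injective hinj hmap)
    exact LinearMap.range_eq_top.mp htop
  obtain ⟨U, ε, hε, hU⟩ := exists_specialLinearGroup_eq_mul_diagonal hX
  refine ⟨U, fun i j => ?_⟩
  have hcol : (P.adjugate * (of x)ᵀ) i j = b j i := congrFun (hx j) i
  rw [hU, ← Matrix.mul_assoc, mul_diagonal, hcol, abs_mul, hε, mul_one]
  exact hb j i

theorem norm_map_col_le {E : Type*} [NormedAddCommGroup E] [NormedSpace ℝ E]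
    (f : (n → ℤ) →+ E) {P U : Matrix n n ℤ} (hP : P.det ≠ 0)
    (hU : ∀ i j, |(P.adjugate * U) i j| ≤ |P.det|) {R : ℝ} (hR : ∀ i, ‖f (P.col i)‖ ≤ R) (j : n) :
    ‖f (U.col j)‖ ≤ Fintype.card n * R := by
  have hcol : P.det • U.col j = ∑ i, (P.adjugate * U) i j • P.col i := by
    have : P.det • U = P * (P.adjugate * U) := by
      rw [← Matrix.mul_assoc, mul_adjugate, smul_mul, Matrix.one_mul]
    ext k
    simpa [mul_apply, mul_comm] using congrFun₂ this k j
  have hdet : (0 : ℝ) < |(P.det : ℝ)| := by positivity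
  have norm_zsmul_eq (a : ℤ) (v : E) : ‖a • v‖ = |(a : ℝ)| * ‖v‖ := by
    rw [← Int.cast_smul_eq_zsmul ℝ, norm_smul, Real.norm_eq_abs]
  refine le_of_mul_le_mul_left ?_ hdet
  calc |(P.det : ℝ)| * ‖f (U.col j)‖
      = ‖∑ i, (P.adjugate * U) i j • f (P.col i)‖ := by
        rw [← norm_zsmul_eq, ← map_zsmul, hcol, map_sum]
        simp only [map_zsmul]
    _ ≤ ∑ _i : n, |(P.det : ℝ)| * R := norm_sum_le_of_le _ fun i _ => by
        rw [norm_zsmul_eq]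
        exact mul_le_mul (by exact_mod_cast hU i j) (hR i) (norm_nonneg _) (abs_nonneg _)
    _ = |(P.det : ℝ)| * (Fintype.card n * R) := by
        rw [Finset.sum_const, Finset.card_univ, nsmul_eq_mul, mul_left_comm]

end LatticeReduction

section Irreducibility

/-- A set `S` of operators acts irreducibly on the `K`-vector space `V` if no subspace other than
`0` and `V` is stable under every element of `S`. Stability is asked of `S` only, not of the group
it generates. -/
def ActsIrreducibly (K V : Type*) {G : Type*} [Field K] [AddCommGroup V] [Module K V] [SMul G V]
    (S : Set G) : Prop :=
  ∀ W : Submodule K V, (∀ g ∈ S, ∀ x ∈ W, g • x ∈ W) → W = ⊥ ∨ W = ⊤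

variable {K V G : Type*} [Field K] [AddCommGroup V] [Module K V] [FiniteDimensional K V]

theorem ActsIrreducibly.span_eq_top [DistribSMul G V] [SMulCommClass G K V] {S : Set G}
    (hS : ActsIrreducibly K V S) {T : ℕ → Set V} (hT : Monotone T)
    (hST : ∀ k, ∀ g ∈ S, ∀ x ∈ T k, g • x ∈ T (k + 1)) {v : V} (hv : v ≠ 0) (hvT : v ∈ T 0) :
    Submodule.span K (T (finrank K V)) = ⊤ := by
  have span_ne_bot (k : ℕ) : Submodule.span K (T k) ≠ ⊥ :=
    fun h => hv ((Submodule.mem_bot K).mp (h ▸ Submodule.subset_span (hT k.zero_le hvT)))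
  have grows (k : ℕ) :
      Submodule.span K (T k) = ⊤ ∨ k < finrank K (Submodule.span K (T k)) := by
    induction k with
    | zero => exact .inr (Nat.pos_of_ne_zero (mt Submodule.finrank_eq_zero.mp (span_ne_bot 0)))
    | succ k ih =>
      have hle : Submodule.span K (T k) ≤ Submodule.span K (T (k + 1)) :=
        Submodule.span_mono (hT k.le_succ)
      rcases hle.eq_or_lt with heq | hlt
      · refine .inl ((hS _ fun g hg x hx => ?_).resolve_left (span_ne_bot (k + 1)))
        rw [← heq] at hx
        have hmap : Submodule.span K (T k) ≤
            (Submodule.span K (T (k + 1))).comap (DistribSMul.toLinearMap K V g) :=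
          Submodule.span_le.mpr fun y hy => Submodule.subset_span (hST k g hg y hy)
        exact hmap hx
      · rcases ih with htop | hk
        · exact .inl (top_le_iff.mp (htop ▸ hle))
        · exact .inr (Nat.succ_le_of_lt hk |>.trans_lt (Submodule.finrank_lt_finrank_of_lt hlt))
  exact (grows _).resolve_right (Submodule.finrank_le _).not_gt

theorem ActsIrreducibly.of_closure [Group G] [DistribMulAction G V] [SMulCommClass G K V]
    {S : Set G} (hS : ActsIrreducibly K V (Subgroup.closure S : Set G)) :
    ActsIrreducibly K V S := by
  intro W hW
  have hstab : Subgroup.closure S ≤ MulAction.stabilizer G W := by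
    refine (Subgroup.closure_le _).mpr fun g hg => ?_
    have hle : g • W ≤ W := by
      rintro _ ⟨x, hx, rfl⟩
      exact hW g hg x hx
    exact Submodule.eq_of_le_of_finrank_eq hle
      (LinearEquiv.finrank_map_eq (DistribMulAction.toLinearEquiv K V g) W)
  refine hS W fun g hg x hx => ?_
  have hgW : g • W = W := hstab hg
  exact hgW ▸ Submodule.smul_mem_pointwise_smul x g W hx

end Irreducibility

section ZariskiDense

variable {n R : Type*} [Fintype n] [DecidableEq n] [CommRing R]

/-- A subset `A` of `SL_n(R)` is Zariski dense if every polynomial in the matrix entries that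
vanishes on `A` vanishes on `SL_n(R)`. -/
def IsZariskiDense (A : Set (SpecialLinearGroup n R)) : Prop :=
  ∀ p : MvPolynomial (n × n) R, (∀ g ∈ A, MvPolynomial.eval (fun ij => g.1 ij.1 ij.2) p = 0) →
    ∀ g : SpecialLinearGroup n R, MvPolynomial.eval (fun ij => g.1 ij.1 ij.2) p = 0

theorem IsZariskiDense.of_image {R' : Type*} [CommRing R'] {φ : R →+* R'}
    (hφ : Function.Injective φ) {A : Set (SpecialLinearGroup n R)}
    (hA : IsZariskiDense (SpecialLinearGroup.map φ '' A)) : IsZariskiDense A := by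
  intro p hp g
  have eval_map (g : SpecialLinearGroup n R) :
      MvPolynomial.eval (fun ij => (SpecialLinearGroup.map φ g).1 ij.1 ij.2) (p.map φ) =
        φ (MvPolynomial.eval (fun ij => g.1 ij.1 ij.2) p) :=
    (MvPolynomial.eval_map _ _ _).trans (MvPolynomial.eval₂_comp _ _ _).symm
  refine (map_eq_zero_iff φ hφ).mp ((eval_map g).symm.trans (hA _ ?_ _))
  rintro _ ⟨a, ha, rfl⟩
  rw [eval_map, hp a ha, map_zero]

theorem eq_zero_or_eq_zero_of_forall_dotProduct_smul [IsDomain R] {u v : n → R}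
    (h : ∀ g : SpecialLinearGroup n R, u ⬝ᵥ (g • v) = 0) : u = 0 ∨ v = 0 := by
  refine or_iff_not_imp_right.mpr fun hv => ?_
  obtain ⟨j, hj : v j ≠ 0⟩ := Function.ne_iff.mp hv
  have huv : u ⬝ᵥ v = 0 := by simpa using h 1
  have hu : ∀ i, i ≠ j → u i = 0 := fun i hij => by
    have htransvection := h (Matrix.SpecialLinearGroup.transvection hij 1)
    simpa [Matrix.SpecialLinearGroup.smul_def, SpecialLinearGroup.transvection_coe, add_mulVec,
      single_mulVec_eq, huv, hj] using htransvection
  ext i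
  by_cases hij : i = j
  · subst hij
    rw [dotProduct, Finset.sum_eq_single i (fun k _ hk => by simp [hu k hk]) (by simp)] at huv
    exact (mul_eq_zero.mp huv).resolve_right hj
  · exact hu i hij

theorem IsZariskiDense.actsIrreducibly {K : Type*} [Field K] {A : Set (SpecialLinearGroup n K)}
    (hA : IsZariskiDense A) : ActsIrreducibly K (n → K) A := by
  refine fun W hW => or_iff_not_imp_right.mpr fun htop => W.eq_bot_iff.mpr fun w hw => ?_
  obtain ⟨φ, hφ, hWφ⟩ := W.exists_le_ker_of_lt_top (lt_top_iff_ne_top.mpr htop)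
  obtain ⟨u, rfl⟩ := (dotProductEquiv K n).surjective φ
  let p : MvPolynomial (n × n) K :=
    ∑ i, ∑ j, MvPolynomial.C (u i * w j) * MvPolynomial.X (i, j)
  have eval_p (g : SpecialLinearGroup n K) :
      MvPolynomial.eval (fun ij => g.1 ij.1 ij.2) p = u ⬝ᵥ (g • w) := by
    simp [p, Matrix.SpecialLinearGroup.smul_def, dotProduct, mulVec, Finset.mul_sum, mul_assoc,
      mul_comm (w _)]
  have hp := hA p fun g hg => by simpa [eval_p] using hWφ (hW g hg w hw)
  have huw := eq_zero_or_eq_zero_of_forall_dotProduct_smul fun g => (eval_p g).symm.trans (hp g)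
  exact huw.resolve_left fun hu => hφ (by rw [hu, map_zero])

theorem actsIrreducibly_rat_of_isZariskiDense_closure {S : Set (SpecialLinearGroup n ℤ)}
    (hS : IsZariskiDense (Subgroup.closure
      (SpecialLinearGroup.map (Int.castRingHom ℝ) '' S) : Set (SpecialLinearGroup n ℝ))) :
    ActsIrreducibly ℚ (n → ℚ) (SpecialLinearGroup.map (Int.castRingHom ℚ) '' S) := by
  have hclosure : (Subgroup.closure (SpecialLinearGroup.map (Int.castRingHom ℝ) '' S) :
      Set (SpecialLinearGroup n ℝ)) = SpecialLinearGroup.map (Rat.castHom ℝ) ''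
        Subgroup.closure (SpecialLinearGroup.map (Int.castRingHom ℚ) '' S) := by
    rw [← Subgroup.coe_map, MonoidHom.map_closure, ← Set.image_comp]
    rfl
  rw [hclosure] at hS
  exact (hS.of_image (Rat.castHom ℝ).injective).actsIrreducibly.of_closure

end ZariskiDense

section IndependentVectors

variable {n : Type*} [Fintype n] [DecidableEq n]

theorem exists_det_ne_zero_of_span_eq_top {L : Set (n → ℤ)}
    (hL : Submodule.span ℚ ((fun z i => (z i : ℚ)) '' L) = ⊤) :
    ∃ P : Matrix n n ℤ, P.det ≠ 0 ∧ ∀ j, P.col j ∈ L := by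
  obtain ⟨b, hbL, -, hb⟩ := Submodule.exists_fun_fin_finrank_span_eq ℚ ((fun z i => (z i : ℚ)) '' L)
  choose p hpL hpb using hbL
  have hcard : Fintype.card n = finrank ℚ (Submodule.span ℚ ((fun z i => (z i : ℚ)) '' L)) := by
    rw [hL, finrank_top, finrank_fintype_fun_eq_card]
  let e := Fintype.equivFinOfCardEq hcard
  refine ⟨(of fun j => p (e j))ᵀ, fun hdet => ?_, fun j => hpL _⟩
  have hcol : ((of fun j => p (e j))ᵀ.map (Int.cast : ℤ → ℚ)).col = b ∘ e :=
    funext fun j => hpb (e j)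
  have hli := hb.comp e e.injective
  rw [← hcol, linearIndependent_cols_iff_isUnit, isUnit_iff_isUnit_det, isUnit_iff_ne_zero] at hli
  exact hli ((Int.cast_det _).symm.trans (by rw [hdet, Int.cast_zero]))

theorem exists_det_ne_zero_norm_col_le {E : Type*} [NormedAddCommGroup E]
    {S : Set (SpecialLinearGroup n ℤ)}
    (hS : ActsIrreducibly ℚ (n → ℚ) (SpecialLinearGroup.map (Int.castRingHom ℚ) '' S))
    (f : (n → ℤ) →+ E) {q : ℝ} (hq : 1 ≤ q) (hf : ∀ s ∈ S, ∀ z, ‖f (s.1 *ᵥ z)‖ ≤ q * ‖f z‖)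
    {z₀ : n → ℤ} (hz₀ : z₀ ≠ 0) :
    ∃ P : Matrix n n ℤ, P.det ≠ 0 ∧ ∀ j, ‖f (P.col j)‖ ≤ q ^ Fintype.card n * ‖f z₀‖ := by
  let T : ℕ → Set (n → ℚ) := fun k => (fun z i => (z i : ℚ)) '' {z | ‖f z‖ ≤ q ^ k * ‖f z₀‖}
  have hT : Monotone T := fun k l hkl => Set.image_mono fun z hz =>
    le_trans (b := q ^ k * ‖f z₀‖) hz (by gcongr)
  have hST : ∀ k, ∀ g ∈ SpecialLinearGroup.map (Int.castRingHom ℚ) '' S, ∀ x ∈ T k,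
      g • x ∈ T (k + 1) := by
    rintro k _ ⟨s, hs, rfl⟩ _ ⟨z, hz : ‖f z‖ ≤ q ^ k * ‖f z₀‖, rfl⟩
    refine ⟨s.1 *ᵥ z, ?_, funext ((Int.castRingHom ℚ).map_mulVec s.1 z)⟩
    calc ‖f (s.1 *ᵥ z)‖ ≤ q * ‖f z‖ := hf s hs z
      _ ≤ q * (q ^ k * ‖f z₀‖) := by gcongr
      _ = q ^ (k + 1) * ‖f z₀‖ := by ring
  have hspan := hS.span_eq_top hT hST (v := fun i => (z₀ i : ℚ))
    (fun h => hz₀ (funext fun i => Int.cast_eq_zero.mp (congrFun h i))) ⟨z₀, by simp, rfl⟩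
  rw [finrank_fintype_fun_eq_card] at hspan
  exact exists_det_ne_zero_of_span_eq_top hspan

end IndependentVectors

section Minkowski

open MeasureTheory

variable {n : Type*} [Fintype n] [DecidableEq n]

theorem exists_int_ne_zero_norm_mulVec_lt [Nonempty n] {h : Matrix n n ℝ} (hdet : h.det ≠ 0) {c : ℝ}
    (hc : 0 < c) (hlt : |h.det| < c ^ Fintype.card n) :
    ∃ z : n → ℤ, z ≠ 0 ∧ ‖h *ᵥ fun i => (z i : ℝ)‖ < c := by
  let b := Pi.basisFun ℝ n
  let s : Set (n → ℝ) := h.toLin' ⁻¹' Metric.ball 0 c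
  have : Countable (Submodule.span ℤ (Set.range b)).toAddSubgroup :=
    inferInstanceAs (Countable (Submodule.span ℤ (Set.range b)))
  have hvol : volume (ZSpan.fundamentalDomain b) * 2 ^ finrank ℝ (n → ℝ) < volume s := by
    have hb : of (Pi.basisFun ℝ n) = 1 := by
      ext i j
      simp [one_apply, Pi.single_apply, eq_comm]
    rw [ZSpan.volume_fundamentalDomain, hb, det_one,
      Measure.addHaar_preimage_linearMap _ (by rwa [LinearMap.det_toLin']),
      LinearMap.det_toLin', Real.volume_pi_ball _ hc, ← ENNReal.ofReal_mul (abs_nonneg _),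
      abs_one, ENNReal.ofReal_one, one_mul, finrank_fintype_fun_eq_card,
      ← ENNReal.ofReal_ofNat, ← ENNReal.ofReal_pow (by norm_num),
      ENNReal.ofReal_lt_ofReal_iff (by positivity), abs_inv, mul_pow, inv_mul_eq_div,
      lt_div_iff₀ (by positivity)]
    gcongr
  obtain ⟨⟨x, hx⟩, hx0, hxs⟩ := exists_ne_zero_mem_lattice_of_measure_mul_two_pow_lt_measure
    (ZSpan.isAddFundamentalDomain' b volume) (s := s)
    (fun x hx => by simpa [s, mulVec_neg] using hx)
    ((convex_ball _ _).linear_preimage _) hvol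
  choose z hz using (b.mem_span_iff_repr_mem ℤ x).mp hx
  have hzx : (fun i => (z i : ℝ)) = x := funext hz
  refine ⟨z, ?_, by simpa [s, hzx] using hxs⟩
  rintro rfl
  exact hx0 (Subtype.ext (hzx.symm.trans (by ext; simp)))

end Minkowski

section Norm

variable {n : Type*} [Fintype n]

theorem norm_toLp_le_card_mul {x : n → ℝ} {c : ℝ} (hx : ∀ i, |x i| ≤ c) :
    ‖WithLp.toLp 2 x‖ ≤ Fintype.card n * c := by
  classical
  have hsum : WithLp.toLp 2 x = ∑ i, EuclideanSpace.single i (x i) := by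
    ext i
    simp [Finset.sum_apply, Pi.single_apply]
  calc ‖WithLp.toLp 2 x‖ ≤ ∑ _i : n, c := hsum ▸ norm_sum_le_of_le _ fun i _ => by simpa using hx i
    _ = Fintype.card n * c := by simp

variable [DecidableEq n]

theorem l2_opNorm_le_sum_norm_col (A : Matrix n n ℝ) : ‖A‖ ≤ ∑ j, ‖WithLp.toLp 2 (A.col j)‖ := by
  rw [cstar_norm_def]
  refine ContinuousLinearMap.opNorm_le_bound _ (by positivity) fun x => ?_
  have hsum : toEuclideanCLM (n := n) (𝕜 := ℝ) A x = ∑ j, x j • WithLp.toLp 2 (A.col j) := by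
    ext i
    simp [mulVec, dotProduct, mul_comm]
  rw [hsum, Finset.sum_mul]
  refine norm_sum_le_of_le _ fun j _ => ?_
  rw [norm_smul, mul_comm]
  gcongr
  exact PiLp.norm_apply_le x j

theorem l2_opNorm_le_card_sq_mul {A : Matrix n n ℝ} {K : ℝ} (hA : ∀ i j, |A i j| ≤ K) :
    ‖A‖ ≤ Fintype.card n ^ 2 * K :=
  calc ‖A‖ ≤ ∑ j, ‖WithLp.toLp 2 (A.col j)‖ := l2_opNorm_le_sum_norm_col A
    _ ≤ ∑ _j : n, Fintype.card n * K :=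
      Finset.sum_le_sum fun j _ => norm_toLp_le_card_mul fun i => hA i j
    _ = Fintype.card n ^ 2 * K := by simp; ring

theorem one_le_l2_opNorm_of_det_eq_one [Nonempty n] {A : Matrix n n ℝ} (hA : A.det = 1) :
    1 ≤ ‖A‖ := by
  by_contra! hlt
  have hlim : Filter.Tendsto (fun k => (A ^ k).det) Filter.atTop (nhds (0 : Matrix n n ℝ).det) :=
    (continuous_id.matrix_det.tendsto _).comp (tendsto_pow_atTop_nhds_zero_of_norm_lt_one hlt)
  simp [hA] at hlim

theorem abs_adjugate_mul_apply_le {R : Type*} [CommRing R] [LinearOrder R] [IsStrictOrderedRing R]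
    {A B : Matrix n n R} {K : R} (hA : ∀ i j, |A i j| ≤ K) (hB : ∀ i j, |B i j| ≤ K) (i j : n) :
    |(A.adjugate * B) i j| ≤ (Fintype.card n).factorial • K ^ Fintype.card n := by
  have hcramer : (A.adjugate * B) i j = (A.updateCol i (B.col j)).det := by
    rw [← cramer_apply, cramer_eq_adjugate_mulVec]
    rfl
  rw [hcramer]
  refine det_le (abv := AbsoluteValue.abs) fun k l => ?_
  by_cases hl : l = i
  · subst hl
    simpa using hB k j
  · simpa [updateCol_ne hl] using hA k l

end Norm

section Conjugation

variable {n : Type*} [Fintype n]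

/-- The additive map `z ↦ h z` from `ℤⁿ` to Euclidean space. For invertible `h` its image is the
lattice `h ℤⁿ`, so that `‖latticeMap h z‖` is the length of `z` in the lattice. -/
def latticeMap (h : Matrix n n ℝ) : (n → ℤ) →+ EuclideanSpace ℝ n where
  toFun z := WithLp.toLp 2 (h *ᵥ fun i => (z i : ℝ))
  map_zero' := by ext; simp [mulVec, dotProduct]
  map_add' z w := by ext; simp [mulVec, dotProduct, mul_add, Finset.sum_add_distrib]

theorem latticeMap_mulVec (h : Matrix n n ℝ) (s : Matrix n n ℤ) (z : n → ℤ) :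
    latticeMap h (s *ᵥ z) = latticeMap (h * s.map (Int.castRingHom ℝ)) z := by
  have hcast : (fun i => ((s *ᵥ z) i : ℝ)) = s.map (Int.castRingHom ℝ) *ᵥ fun i => (z i : ℝ) :=
    funext ((Int.castRingHom ℝ).map_mulVec s z)
  simp only [latticeMap, AddMonoidHom.coe_mk, ZeroHom.coe_mk, hcast, mulVec_mulVec]

theorem abs_mul_apply_le_norm_latticeMap (h : Matrix n n ℝ) (U : Matrix n n ℤ) (i j : n) :
    |(h * U.map (Int.castRingHom ℝ)) i j| ≤ ‖latticeMap h (U.col j)‖ :=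
  PiLp.norm_apply_le (latticeMap h (U.col j)) i

variable [DecidableEq n]

theorem norm_latticeMap_mulVec_le (h : SpecialLinearGroup n ℝ) (s : SpecialLinearGroup n ℤ)
    (z : n → ℤ) :
    ‖latticeMap h.1 (s.1 *ᵥ z)‖ ≤
      ‖(h * SpecialLinearGroup.map (Int.castRingHom ℝ) s * h⁻¹).1‖ * ‖latticeMap h.1 z‖ := by
  have hconj : h.1 * s.1.map (Int.castRingHom ℝ) =
      (h * SpecialLinearGroup.map (Int.castRingHom ℝ) s * h⁻¹).1 * h.1 :=
    congrArg Subtype.val (inv_mul_cancel_right (h * SpecialLinearGroup.map (Int.castRingHom ℝ) s)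
      h).symm
  rw [latticeMap_mulVec, hconj]
  simpa [latticeMap, mulVec_mulVec] using! l2_opNorm_mulVec
    (h * SpecialLinearGroup.map (Int.castRingHom ℝ) s * h⁻¹).1 (latticeMap h.1 z)

theorem exists_ne_zero_norm_latticeMap_le [Nonempty n] (h : SpecialLinearGroup n ℝ) :
    ∃ z : n → ℤ, z ≠ 0 ∧ ‖latticeMap h.1 z‖ ≤ Fintype.card n * 2 := by
  obtain ⟨z, hz, hlt⟩ := exists_int_ne_zero_norm_mulVec_lt (h := h.1) (by simp) two_pos
    (by simpa using one_lt_pow₀ one_lt_two Fintype.card_ne_zero)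
  exact ⟨z, hz, norm_toLp_le_card_mul fun i => (norm_le_pi_norm _ i).trans hlt.le⟩

theorem exists_norm_latticeMap_col_le [Nonempty n] {S : Set (SpecialLinearGroup n ℤ)}
    (hS : ActsIrreducibly ℚ (n → ℚ) (SpecialLinearGroup.map (Int.castRingHom ℚ) '' S))
    (h : SpecialLinearGroup n ℝ) {q : ℝ} (hq : 1 ≤ q)
    (hSq : ∀ s ∈ S, ‖(h * SpecialLinearGroup.map (Int.castRingHom ℝ) s * h⁻¹).1‖ ≤ q) :
    ∃ U : SpecialLinearGroup n ℤ, ∀ j, ‖latticeMap h.1 (U.1.col j)‖ ≤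
      Fintype.card n * (q ^ Fintype.card n * (Fintype.card n * 2)) := by
  obtain ⟨z₀, hz₀, hz₀norm⟩ := exists_ne_zero_norm_latticeMap_le h
  obtain ⟨P, hP, hPnorm⟩ := exists_det_ne_zero_norm_col_le hS (latticeMap h.1) hq
    (fun s hs z => (norm_latticeMap_mulVec_le h s z).trans (by gcongr; exact hSq s hs)) hz₀
  obtain ⟨U, hU⟩ := exists_specialLinearGroup_abs_adjugate_mul_le hP
  exact ⟨U, norm_map_col_le _ hP hU fun j => (hPnorm j).trans (by gcongr)⟩

theorem l2_opNorm_inv_mul_mul_le (h : SpecialLinearGroup n ℝ) (s U : SpecialLinearGroup n ℤ)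
    {q R : ℝ} (hq : 1 ≤ q)
    (hs : ‖(h * SpecialLinearGroup.map (Int.castRingHom ℝ) s * h⁻¹).1‖ ≤ q)
    (hU : ∀ j, ‖latticeMap h.1 (U.1.col j)‖ ≤ R) :
    ‖(SpecialLinearGroup.map (Int.castRingHom ℝ) (U⁻¹ * s * U)).1‖ ≤
      Fintype.card n ^ 2 * ((Fintype.card n).factorial * (q * R) ^ Fintype.card n) := by
  have hconj : (SpecialLinearGroup.map (Int.castRingHom ℝ) (U⁻¹ * s * U)).1 =
      (h.1 * U.1.map (Int.castRingHom ℝ)).adjugate *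
        (h.1 * (s.1 * U.1).map (Int.castRingHom ℝ)) := by
    have : SpecialLinearGroup.map (Int.castRingHom ℝ) (U⁻¹ * s * U) =
        (h * SpecialLinearGroup.map (Int.castRingHom ℝ) U)⁻¹ *
          (h * SpecialLinearGroup.map (Int.castRingHom ℝ) (s * U)) := by
      simp only [map_mul, map_inv]
      group
    rw [this]
    rfl
  rw [hconj]
  refine l2_opNorm_le_card_sq_mul fun i j => ?_
  rw [← nsmul_eq_mul]
  refine abs_adjugate_mul_apply_le (fun i j => ?_) (fun i j => ?_) i j
  · calc |(h.1 * U.1.map (Int.castRingHom ℝ)) i j| ≤ ‖latticeMap h.1 (U.1.col j)‖ :=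
        abs_mul_apply_le_norm_latticeMap _ _ i j
      _ ≤ R := hU j
      _ ≤ q * R := le_mul_of_one_le_left ((norm_nonneg _).trans (hU j)) hq
  · calc |(h.1 * (s.1 * U.1).map (Int.castRingHom ℝ)) i j|
        ≤ ‖latticeMap h.1 (s.1 *ᵥ U.1.col j)‖ := abs_mul_apply_le_norm_latticeMap _ _ i j
      _ ≤ q * R := (norm_latticeMap_mulVec_le h s _).trans (by gcongr; exact hU j)

theorem exists_l2_opNorm_conj_le [Nonempty n] {S : Set (SpecialLinearGroup n ℤ)}
    (hS : ActsIrreducibly ℚ (n → ℚ) (SpecialLinearGroup.map (Int.castRingHom ℚ) '' S))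
    (h : SpecialLinearGroup n ℝ) {q : ℝ} (hq : 1 ≤ q)
    (hSq : ∀ s ∈ S, ‖(h * SpecialLinearGroup.map (Int.castRingHom ℝ) s * h⁻¹).1‖ ≤ q) :
    ∃ γ : SpecialLinearGroup n ℤ, ∀ s ∈ S,
      ‖(SpecialLinearGroup.map (Int.castRingHom ℝ) (γ * s * γ⁻¹)).1‖ ≤
        Fintype.card n ^ 2 * (Fintype.card n).factorial *
          (2 * Fintype.card n ^ 2) ^ Fintype.card n *
            q ^ (Fintype.card n * (Fintype.card n + 1)) := by
  obtain ⟨U, hU⟩ := exists_norm_latticeMap_col_le hS h hq hSq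
  refine ⟨U⁻¹, fun s hs => ?_⟩
  rw [inv_inv]
  refine (l2_opNorm_inv_mul_mul_le h s U hq (hSq s hs) hU).trans_eq ?_
  have hbase : q * (Fintype.card n * (q ^ Fintype.card n * (Fintype.card n * 2))) =
      2 * Fintype.card n ^ 2 * q ^ (Fintype.card n + 1) := by ring
  rw [hbase, mul_pow, ← pow_mul, mul_comm (Fintype.card n + 1)]
  ring

/-- The largest operator norm of an element of `h S h⁻¹`. Its infimum over `h` is the number `E(S)`
of the theorem. It is `0` when `S` is empty. -/
noncomputable def conjNorm (S : Set (SpecialLinearGroup n ℤ)) (h : SpecialLinearGroup n ℝ) : ℝ :=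
  sSup ((fun t => ‖(h * SpecialLinearGroup.map (Int.castRingHom ℝ) t * h⁻¹).1‖) '' S)

theorem le_conjNorm {S : Set (SpecialLinearGroup n ℤ)} (hS : S.Finite) (h : SpecialLinearGroup n ℝ)
    {s : SpecialLinearGroup n ℤ} (hs : s ∈ S) :
    ‖(h * SpecialLinearGroup.map (Int.castRingHom ℝ) s * h⁻¹).1‖ ≤ conjNorm S h :=
  le_csSup (hS.image _).bddAbove (Set.mem_image_of_mem _ hs)

theorem one_le_conjNorm [Nonempty n] {S : Set (SpecialLinearGroup n ℤ)} (hS : S.Finite)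
    (hne : S.Nonempty) (h : SpecialLinearGroup n ℝ) : 1 ≤ conjNorm S h :=
  let ⟨_, hs⟩ := hne
  (one_le_l2_opNorm_of_det_eq_one (Matrix.SpecialLinearGroup.det_coe _)).trans (le_conjNorm hS h hs)

end Conjugation

theorem integral_conjugation_reducing_norm_general (n : Type*) [Fintype n] [DecidableEq n]
    [Nonempty n] :
    ∃ c r : ℝ, 0 < c ∧ 0 < r ∧ ∀ S : Set (SpecialLinearGroup n ℤ), S.Finite →
      ActsIrreducibly ℚ (n → ℚ) (SpecialLinearGroup.map (Int.castRingHom ℚ) '' S) →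
      ∃ γ : SpecialLinearGroup n ℤ, ∀ s ∈ S,
        ‖(SpecialLinearGroup.map (Int.castRingHom ℝ) (γ * s * γ⁻¹)).1‖ ≤
          c * (⨅ h, conjNorm S h) ^ r := by
  let d := Fintype.card n
  let C : ℝ := d ^ 2 * d.factorial * (2 * d ^ 2) ^ d
  have hd : 0 < d := Fintype.card_pos
  refine ⟨C * 2 ^ (d * (d + 1)), (d * (d + 1) : ℕ), by positivity, by positivity,
    fun S hfin hS => ?_⟩
  rcases S.eq_empty_or_nonempty with rfl | hne
  · exact ⟨1, by simp⟩
  have hE : 0 < ⨅ h, conjNorm S h := one_pos.trans_le (le_ciInf (one_le_conjNorm hfin hne))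
  obtain ⟨h, hh⟩ := exists_lt_of_ciInf_lt (lt_two_mul_self hE)
  have hh_one := one_le_conjNorm hfin hne h
  obtain ⟨γ, hγ⟩ := exists_l2_opNorm_conj_le hS h hh_one fun s hs => le_conjNorm hfin h hs
  refine ⟨γ, fun s hs => ?_⟩
  calc ‖(SpecialLinearGroup.map (Int.castRingHom ℝ) (γ * s * γ⁻¹)).1‖
      ≤ C * conjNorm S h ^ (d * (d + 1)) := hγ s hs
    _ ≤ C * (2 * ⨅ h, conjNorm S h) ^ (d * (d + 1)) := by gcongr
    _ = C * 2 ^ (d * (d + 1)) * (⨅ h, conjNorm S h) ^ ((d * (d + 1) : ℕ) : ℝ) := by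
        rw [Real.rpow_natCast, mul_pow, mul_assoc C]

theorem rvNorm_eq_norm_toLp {d : ℕ} (x : Fin d → ℝ) : rvNorm x = ‖WithLp.toLp 2 x‖ := by
  simp [rvNorm, EuclideanSpace.norm_eq]

theorem rOpNorm_eq_l2_opNorm {d : ℕ} (M : Matrix (Fin d) (Fin d) ℝ) : rOpNorm M = ‖M‖ := by
  rw [cstar_norm_def, ← ContinuousLinearMap.sSup_unitClosedBall_eq_norm, rOpNorm]
  congr 1
  ext r
  constructor
  · rintro ⟨x, hx, rfl⟩
    exact ⟨WithLp.toLp 2 x, by simpa [rvNorm_eq_norm_toLp] using hx,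
      by simp [rvNorm_eq_norm_toLp]⟩
  · rintro ⟨x, hx, rfl⟩
    exact ⟨x.ofLp, by simpa [rvNorm_eq_norm_toLp] using hx, by rw [rvNorm_eq_norm_toLp]; rfl⟩

/-- **Integral conjugation reducing the norm (Proposition 15).** For every `d ≥ 2` there are
`c₁, r₁ > 0` such that for every finite `S ⊆ SL_d(ℤ)` generating a Zariski-dense subgroup of
`SL_d(ℝ)` there is `γ ∈ SL_d(ℤ)` with `sup_{s ∈ S} ‖γ s γ⁻¹‖ ≤ c₁ · E(S)^{r₁}`, where
`E(S) = inf_{h ∈ SL_d(ℝ)} sup_{s ∈ S} ‖h s h⁻¹‖`. -/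
theorem integral_conjugation_reducing_norm (d : ℕ) (hd : 2 ≤ d) :
    ∃ c₁ r₁ : ℝ, 0 < c₁ ∧ 0 < r₁ ∧
      ∀ S : Finset (Matrix.SpecialLinearGroup (Fin d) ℤ),
        -- the subgroup generated by the image of `S` is Zariski dense in `SL_d(ℝ)`:
        (∀ p : MvPolynomial (Fin d × Fin d) ℝ,
          (∀ g : Matrix.SpecialLinearGroup (Fin d) ℝ,
            g ∈ Subgroup.closure
              ((Matrix.SpecialLinearGroup.map (n := Fin d) (Int.castRingHom ℝ)) ''
                (S : Set (Matrix.SpecialLinearGroup (Fin d) ℤ))) →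
            MvPolynomial.eval (fun ij => (g : Matrix (Fin d) (Fin d) ℝ) ij.1 ij.2) p = 0) →
          ∀ g : Matrix.SpecialLinearGroup (Fin d) ℝ,
            MvPolynomial.eval (fun ij => (g : Matrix (Fin d) (Fin d) ℝ) ij.1 ij.2) p = 0) →
        ∃ γ : Matrix.SpecialLinearGroup (Fin d) ℤ, ∀ s ∈ S,
          rOpNorm ((Matrix.SpecialLinearGroup.map (n := Fin d) (Int.castRingHom ℝ)
              (γ * s * γ⁻¹) : Matrix.SpecialLinearGroup (Fin d) ℝ) :
            Matrix (Fin d) (Fin d) ℝ) ≤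
          c₁ * (⨅ h : Matrix.SpecialLinearGroup (Fin d) ℝ,
              sSup ((fun t : Matrix.SpecialLinearGroup (Fin d) ℤ =>
                  rOpNorm ((h * Matrix.SpecialLinearGroup.map (n := Fin d)
                      (Int.castRingHom ℝ) t * h⁻¹ : Matrix.SpecialLinearGroup (Fin d) ℝ) :
                    Matrix (Fin d) (Fin d) ℝ)) ''
                (S : Set (Matrix.SpecialLinearGroup (Fin d) ℤ)))) ^ r₁ := by
  have : Nonempty (Fin d) := ⟨⟨0, by lia⟩⟩
  obtain ⟨c, r, hc, hr, hmain⟩ := integral_conjugation_reducing_norm_general (Fin d)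
  refine ⟨c, r, hc, hr, fun S hS => ?_⟩
  simp only [rOpNorm_eq_l2_opNorm]
  exact hmain S S.finite_toSet (actsIrreducibly_rat_of_isZariskiDense_closure hS)
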